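/- arXiv:math/0211376 — 6 statements merged into one kernel-verified Lean document; each statement's English description precedes it below -/
import Mathlib

section
/- Let E be a finite-dimensional real normed vector space, U ⊆ E an open set, and X : U → E a vector field. Suppose ω : ℝ → ℝ is continuous and positive on (0,∞), nondecreasing on (0,∞), and satisfies Osgood's condition that t ↦ 1/ω(t) is not integrable on the interval (0, 1/2) (i.e. ∫₀^{1/2} dt/ω(t) = ∞). Assume ‖X(a) − X(b)‖ ≤ ω(‖a − b‖) for all a, b ∈ U with a ≠ b. If I is an interval, t₀ ∈ I, and γ₁, γ₂ : I → U are differentiable with γᵢ'(t) = X(γᵢ(t)) for all t ∈ I and γ₁(t₀) = γ₂(t₀), then γ₁(t) = γ₂(t) for all t ∈ I. -/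
/-!
The primitive `G` of `1 / ω` is a strictly increasing bijection from `(0, ε]` onto an interval
which, by Osgood's condition, is all of `(-∞, G ε]`. Its inverse therefore solves `B' = ω ∘ B` with
any prescribed value `ε > 0` at the final time, backwards for all time and without ever reaching
`0`. If `f` starts at `0` and `‖f'‖ ≤ ω ‖f‖`, then `‖f‖` starts below such a positive solution of
the faster equation `B' = 2 ω ∘ B` and cannot cross it, so it ends below `ε`. Letting `ε → 0` gives
`f = 0`; uniqueness is the case where `f` is the difference of two integral curves.
-/

open Set Filter Topology MeasureTheory

section Integrability

variable {E : Type*} [NormedAddCommGroup E] {g : ℝ → E} {a b : ℝ}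

lemma integrableOn_Ioo_of_integrableAtFilter_nhdsGT (hg : LocallyIntegrableOn g (Ioc a b))
    (hga : IntegrableAtFilter g (𝓝[>] a)) : IntegrableOn g (Ioo a b) := by
  obtain ⟨s, hs, hgs⟩ := hga
  obtain ⟨u, hu : a < u, hus⟩ := mem_nhdsGT_iff_exists_Ioo_subset.1 hs
  obtain ⟨c, hac, hcu⟩ := exists_between hu
  have hfar : IntegrableOn g (Icc c b) :=
    hg.integrableOn_compact_subset (fun _ ht => ⟨hac.trans_le ht.1, ht.2⟩) isCompact_Icc
  refine (hgs.union hfar).mono_set fun t ht => ?_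
  rcases lt_or_ge t c with htc | hct
  · exact Or.inl (hus ⟨ht.1, htc.trans hcu⟩)
  · exact Or.inr ⟨hct, ht.2.le⟩

lemma exists_lt_integral_norm_of_not_integrableAtFilter_nhdsGT (hab : a < b)
    (hg : LocallyIntegrableOn g (Ioc a b)) (hga : ¬ IntegrableAtFilter g (𝓝[>] a))
    (C : ℝ) : ∃ u ∈ Ioo a b, C < ∫ x in u..b, ‖g x‖ := by
  by_contra! hC
  have hint : ∀ u ∈ Ioo a b, IntegrableOn g (Ioc u b) := fun u hu =>
    (hg.integrableOn_compact_subset (fun _ ht => ⟨hu.1.trans_le ht.1, ht.2⟩)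
      isCompact_Icc).mono_set Ioc_subset_Icc_self
  obtain ⟨u, -, hu, hlim⟩ := exists_seq_strictAnti_tendsto' hab
  refine hga ⟨Ioc a b, Ioc_mem_nhdsGT hab,
    integrableOn_Ioc_of_intervalIntegral_norm_bounded_left (I := C) (fun n => hint _ (hu n)) hlim
      (Eventually.of_forall fun n => ?_)⟩
  rw [← intervalIntegral.integral_of_le (hu n).2.le]
  exact hC _ (hu n)

end Integrability

section Primitive

variable {E : Type*} [NormedAddCommGroup E] [NormedSpace ℝ E] [CompleteSpace E] {s : Set ℝ}
  {a b : ℝ}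

lemma hasStrictDerivAt_integral_of_continuousOn {g : ℝ → E} (hs : IsOpen s)
    (hsc : s.OrdConnected) (hg : ContinuousOn g s) (ha : a ∈ s) (hb : b ∈ s) :
    HasStrictDerivAt (fun u => ∫ x in a..u, g x) (g b) b :=
  intervalIntegral.integral_hasStrictDerivAt_right
    (hg.mono (hsc.uIcc_subset ha hb)).intervalIntegrable
    (hg.stronglyMeasurableAtFilter hs b hb) (hg.continuousAt (hs.mem_nhds hb))

lemma continuousOn_integral_of_continuousOn {g : ℝ → E} (hs : IsOpen s) (hsc : s.OrdConnected)
    (hg : ContinuousOn g s) (ha : a ∈ s) : ContinuousOn (fun u => ∫ x in a..u, g x) s := fun _ hu =>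
  (hasStrictDerivAt_integral_of_continuousOn hs hsc hg ha
    hu).hasDerivAt.continuousAt.continuousWithinAt

lemma strictMonoOn_integral_of_pos {g : ℝ → ℝ} (hs : IsOpen s) (hsc : s.OrdConnected)
    (hg : ContinuousOn g s) (hg_pos : ∀ x ∈ s, 0 < g x) (ha : a ∈ s) :
    StrictMonoOn (fun u => ∫ x in a..u, g x) s := by
  refine strictMonoOn_of_deriv_pos hsc.convex
    (continuousOn_integral_of_continuousOn hs hsc hg ha) fun u hu => ?_
  have hus : u ∈ s := interior_subset hu
  rw [(hasStrictDerivAt_integral_of_continuousOn hs hsc hg ha hus).hasDerivAt.deriv]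
  exact hg_pos u hus

end Primitive

/-- The functions `ω` admitted by Osgood's theorem as bounds on the oscillation of a vector field.
Osgood's condition `∫₀ dr / ω r = ∞` is expressed as non-integrability near `0⁺`, which involves no
choice of upper limit. -/
structure IsOsgood (ω : ℝ → ℝ) : Prop where
  continuousOn : ContinuousOn ω (Ioi 0)
  pos : ∀ r, 0 < r → 0 < ω r
  not_integrableAtFilter : ¬ IntegrableAtFilter (fun r => (ω r)⁻¹) (𝓝[>] 0)

namespace IsOsgood

variable {ω : ℝ → ℝ} {ε : ℝ}

lemma of_not_integrableOn_Ioo {c : ℝ} (hω_cont : ContinuousOn ω (Ioi 0))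
    (hω_pos : ∀ r, 0 < r → 0 < ω r) (hω : ¬ IntegrableOn (fun r => (ω r)⁻¹) (Ioo 0 c)) :
    IsOsgood ω where
  continuousOn := hω_cont
  pos := hω_pos
  not_integrableAtFilter h := hω <| integrableOn_Ioo_of_integrableAtFilter_nhdsGT
    (((hω_cont.inv₀ fun r hr => (hω_pos r hr).ne').mono Ioc_subset_Ioi_self).locallyIntegrableOn
      measurableSet_Ioc) h

lemma const_mul (hω : IsOsgood ω) {c : ℝ} (hc : 0 < c) : IsOsgood fun r => c * ω r where
  continuousOn := hω.continuousOn.const_mul c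
  pos r hr := mul_pos hc (hω.pos r hr)
  not_integrableAtFilter h := by
    have hscale : (fun r => (ω r)⁻¹) = c • fun r => (c * ω r)⁻¹ := by
      ext r
      rw [Pi.smul_apply, smul_eq_mul, mul_inv, mul_inv_cancel_left₀ hc.ne']
    exact hω.not_integrableAtFilter (hscale ▸ h.smul c)

lemma continuousOn_inv (hω : IsOsgood ω) : ContinuousOn (fun r => (ω r)⁻¹) (Ioi 0) :=
  hω.continuousOn.inv₀ fun r hr => (hω.pos r hr).ne'

lemma surjOn_integral_inv (hω : IsOsgood ω) (hε : 0 < ε) :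
    SurjOn (fun u => ∫ r in ε..u, (ω r)⁻¹) (Ioc 0 ε) (Iic 0) := by
  intro y (hy : y ≤ 0)
  have hint : LocallyIntegrableOn (fun r => (ω r)⁻¹) (Ioc 0 ε) :=
    (hω.continuousOn_inv.mono Ioc_subset_Ioi_self).locallyIntegrableOn measurableSet_Ioc
  obtain ⟨v, ⟨hv, hvε⟩, hlarge⟩ :=
    exists_lt_integral_norm_of_not_integrableAtFilter_nhdsGT hε hint hω.not_integrableAtFilter (-y)
  have hnorm : ∫ r in v..ε, ‖(ω r)⁻¹‖ = -∫ r in ε..v, (ω r)⁻¹ := by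
    rw [← intervalIntegral.integral_symm]
    refine intervalIntegral.integral_congr fun r hr => Real.norm_of_nonneg ?_
    exact (inv_pos.2 (hω.pos r (hv.trans_le (uIcc_of_le hvε.le ▸ hr).1))).le
  have hsub : Icc v ε ⊆ Ioc 0 ε := fun _ hr => ⟨hv.trans_le hr.1, hr.2⟩
  refine image_mono hsub (intermediate_value_Icc hvε.le
    ((continuousOn_integral_of_continuousOn isOpen_Ioi ordConnected_Ioi hω.continuousOn_inv hε).mono
      (hsub.trans Ioc_subset_Ioi_self)) ⟨?_, ?_⟩)
  · linarith
  · simpa using hy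

lemma exists_pos_hasDerivAt_backward (hω : IsOsgood ω) (hε : 0 < ε) (T : ℝ) :
    ∃ B : ℝ → ℝ, B T = ε ∧ ∀ t ≤ T, 0 < B t ∧ HasDerivAt B (ω (B t)) t := by
  set G : ℝ → ℝ := fun u => ∫ r in ε..u, (ω r)⁻¹ with hG
  set H : ℝ → ℝ := Function.invFunOn G (Ioi 0)
  have hHG : LeftInvOn H G (Ioi 0) :=
    (strictMonoOn_integral_of_pos isOpen_Ioi ordConnected_Ioi hω.continuousOn_inv
      (fun r hr => inv_pos.2 (hω.pos r hr)) hε).injOn.leftInvOn_invFunOn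
  refine ⟨fun t => H (t - T), ?_, fun t ht => ?_⟩
  · simpa [hG] using hHG hε
  · obtain ⟨u, ⟨hu, -⟩, hGu : G u = t - T⟩ := hω.surjOn_integral_inv hε (sub_nonpos.2 ht)
    have hHu : H (t - T) = u := hGu ▸ hHG hu
    have hG' : HasStrictDerivAt G (ω u)⁻¹ u := hasStrictDerivAt_integral_of_continuousOn
      isOpen_Ioi ordConnected_Ioi hω.continuousOn_inv hε hu
    have hH : HasDerivAt H (ω u) (t - T) := by
      rw [← hGu]
      simpa only [inv_inv] using
        (hG'.to_local_left_inverse (inv_pos.2 (hω.pos u hu)).ne'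
          (hHG.eqOn.eventuallyEq_of_mem (Ioi_mem_nhds hu))).hasDerivAt
    simpa only [hHu] using And.intro hu (hH.comp_sub_const t T)

variable {E : Type*} [NormedAddCommGroup E] [NormedSpace ℝ E] {f f' : ℝ → E}

lemma eq_zero_of_norm_deriv_right_le (hω : IsOsgood ω) {a b : ℝ} (hab : a ≤ b)
    (hf : ContinuousOn f (Icc a b)) (hf' : ∀ t ∈ Ico a b, HasDerivWithinAt f (f' t) (Ici t) t)
    (bound : ∀ t ∈ Ico a b, f t ≠ 0 → ‖f' t‖ ≤ ω ‖f t‖) (ha : f a = 0) : f b = 0 := by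
  refine norm_le_zero_iff.1 (le_of_forall_gt_imp_ge_of_dense fun ε hε => ?_)
  obtain ⟨B, hBb, hB⟩ := (hω.const_mul two_pos).exists_pos_hasDerivAt_backward hε b
  have hno_crossing : ∀ t ∈ Ico a b, ‖f t‖ = B t → ‖f' t‖ < 2 * ω (B t) := fun t ht heq => by
    have hBt : 0 < B t := (hB t ht.2.le).1
    have hft : f t ≠ 0 := norm_pos_iff.1 (heq ▸ hBt)
    calc ‖f' t‖ ≤ ω (B t) := heq ▸ bound t ht hft
      _ < 2 * ω (B t) := lt_mul_of_one_lt_left (hω.pos _ hBt) one_lt_two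
  rw [← hBb]
  exact image_norm_le_of_norm_deriv_right_lt_deriv_boundary' hf hf'
    (by simpa [ha] using (hB a hab).1.le)
    (fun t ht => (hB t ht.2).2.continuousAt.continuousWithinAt)
    (fun t ht => (hB t ht.2.le).2.hasDerivWithinAt) hno_crossing (right_mem_Icc.2 hab)

variable {I : Set ℝ} {t₀ : ℝ}

lemma eqOn_zero_inter_Ici_of_norm_derivWithin_le (hω : IsOsgood ω) (hI : I.OrdConnected)
    (ht₀ : t₀ ∈ I) (hf : ∀ t ∈ I, HasDerivWithinAt f (f' t) I t)
    (bound : ∀ t ∈ I, f t ≠ 0 → ‖f' t‖ ≤ ω ‖f t‖) (hinit : f t₀ = 0) :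
    EqOn f 0 (I ∩ Ici t₀) := by
  intro t ⟨ht, ht₀t⟩
  have hIcc : Icc t₀ t ⊆ I := hI.out ht₀ ht
  have hIco : Ico t₀ t ⊆ I := Ico_subset_Icc_self.trans hIcc
  have hright : ∀ r ∈ Ico t₀ t, HasDerivWithinAt f (f' r) (Ici r) r := fun r hr =>
    (hf r (hIco hr)).mono_of_mem_nhdsWithin
      (mem_of_superset (Icc_mem_nhdsGE hr.2) ((Icc_subset_Icc_left hr.1).trans hIcc))
  exact hω.eq_zero_of_norm_deriv_right_le ht₀t
    (fun r hr => (hf r (hIcc hr)).continuousWithinAt.mono hIcc) hright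
    (fun r hr => bound r (hIco hr)) hinit

lemma eqOn_zero_of_norm_derivWithin_le (hω : IsOsgood ω) (hI : I.OrdConnected)
    (ht₀ : t₀ ∈ I) (hf : ∀ t ∈ I, HasDerivWithinAt f (f' t) I t)
    (bound : ∀ t ∈ I, f t ≠ 0 → ‖f' t‖ ≤ ω ‖f t‖) (hinit : f t₀ = 0) : EqOn f 0 I := by
  intro t ht
  rcases le_total t₀ t with h | h
  · exact hω.eqOn_zero_inter_Ici_of_norm_derivWithin_le hI ht₀ hf bound hinit ⟨ht, h⟩
  · have hreflect : ∀ r ∈ Neg.neg ⁻¹' I,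
        HasDerivWithinAt (fun r => f (-r)) (-f' (-r)) (Neg.neg ⁻¹' I) r := fun r hr => by
      simpa [Function.comp_def] using
        (hf (-r) hr).scomp r (hasDerivAt_neg r).hasDerivWithinAt (mapsTo_preimage _ _)
    simpa using hω.eqOn_zero_inter_Ici_of_norm_derivWithin_le (t₀ := -t₀)
      (hI.preimage_anti fun _ _ => neg_le_neg) (by simpa using ht₀) hreflect
      (fun r hr hne => (norm_neg (f' (-r))).trans_le (bound (-r) hr hne)) (by simpa using hinit)
      (show -t ∈ Neg.neg ⁻¹' I ∩ Ici (-t₀) from ⟨by simpa using ht, neg_le_neg h⟩)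

end IsOsgood

theorem osgood_uniqueness_general {E : Type*} [NormedAddCommGroup E] [NormedSpace ℝ E]
    {v : ℝ → E → E} {s : ℝ → Set E} {ω : ℝ → ℝ} (hω : IsOsgood ω) {I : Set ℝ}
    (hI : I.OrdConnected)
    (hv : ∀ t ∈ I, ∀ x ∈ s t, ∀ y ∈ s t, x ≠ y → ‖v t x - v t y‖ ≤ ω ‖x - y‖)
    {t₀ : ℝ} (ht₀ : t₀ ∈ I) {γ₁ γ₂ : ℝ → E}
    (hγ₁s : ∀ t ∈ I, γ₁ t ∈ s t) (hγ₂s : ∀ t ∈ I, γ₂ t ∈ s t)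
    (hγ₁ : ∀ t ∈ I, HasDerivWithinAt γ₁ (v t (γ₁ t)) I t)
    (hγ₂ : ∀ t ∈ I, HasDerivWithinAt γ₂ (v t (γ₂ t)) I t)
    (hinit : γ₁ t₀ = γ₂ t₀) : EqOn γ₁ γ₂ I := by
  have hzero : EqOn (γ₁ - γ₂) 0 I := hω.eqOn_zero_of_norm_derivWithin_le hI ht₀
    (fun t ht => (hγ₁ t ht).sub (hγ₂ t ht))
    (fun t ht hne => hv t ht _ (hγ₁s t ht) _ (hγ₂s t ht) (sub_ne_zero.1 hne))
    (sub_eq_zero.2 hinit)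
  exact fun t ht => sub_eq_zero.1 (hzero ht)

/-- Osgood's uniqueness theorem for ODEs: if the vector field `X` on an open set
`U` of a finite-dimensional real normed space has modulus of continuity `ω`,
where `ω` is continuous, positive and nondecreasing on `(0,∞)` and satisfies
Osgood's condition `∫₀^{1/2} dt/ω(t) = ∞` (i.e. `1/ω` is not integrable on
`(0, 1/2)`), then two integral curves of `X` defined on an interval `I` that
agree at some `t₀ ∈ I` agree on all of `I`. -/
theorem osgood_uniqueness
    {E : Type*} [NormedAddCommGroup E] [NormedSpace ℝ E] [FiniteDimensional ℝ E]
    (U : Set E) (hU : IsOpen U) (X : E → E)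
    (ω : ℝ → ℝ)
    (hω_cont : ContinuousOn ω (Set.Ioi (0 : ℝ)))
    (hω_pos : ∀ t : ℝ, 0 < t → 0 < ω t)
    (hω_mono : MonotoneOn ω (Set.Ioi (0 : ℝ)))
    (hω_osgood : ¬ MeasureTheory.IntegrableOn (fun t => 1 / ω t)
      (Set.Ioo (0 : ℝ) (1 / 2)))
    (hX : ∀ a ∈ U, ∀ b ∈ U, a ≠ b → ‖X a - X b‖ ≤ ω ‖a - b‖)
    (I : Set ℝ) (hI : I.OrdConnected) (t₀ : ℝ) (ht₀ : t₀ ∈ I)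
    (γ₁ γ₂ : ℝ → E)
    (hγ₁U : ∀ t ∈ I, γ₁ t ∈ U) (hγ₂U : ∀ t ∈ I, γ₂ t ∈ U)
    (hγ₁ : ∀ t ∈ I, HasDerivAt γ₁ (X (γ₁ t)) t)
    (hγ₂ : ∀ t ∈ I, HasDerivAt γ₂ (X (γ₂ t)) t)
    (hinit : γ₁ t₀ = γ₂ t₀) :
    ∀ t ∈ I, γ₁ t = γ₂ t := by
  have hω : IsOsgood ω :=
    .of_not_integrableOn_Ioo hω_cont hω_pos (by simpa only [one_div] using hω_osgood)
  exact osgood_uniqueness_general hω hI (fun _ _ => hX) ht₀ hγ₁U hγ₂U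
    (fun t ht => (hγ₁ t ht).hasDerivWithinAt) (fun t ht => (hγ₂ t ht).hasDerivWithinAt) hinit
end

section
/- Let E be a finite-dimensional real normed vector space, U ⊆ E an open set, C > 0, and X : U → E a vector field satisfying the log-Lipschitz condition ‖X(a) − X(b)‖ ≤ C‖a − b‖·log(1/‖a − b‖) for all a, b ∈ U with 0 < ‖a − b‖ ≤ 1/2. If I is an interval, t₀ ∈ I, and γ₁, γ₂ : I → U are differentiable with γᵢ'(t) = X(γᵢ(t)) for all t ∈ I and γ₁(t₀) = γ₂(t₀), then γ₁(t) = γ₂(t) for all t ∈ I. -/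
/-!
Let `L` be a primitive of `1 / ω`, so that `L r → -∞` as `r → 0⁺`. If `f` is the difference of two
integral curves, then `L ‖f‖` grows at rate at most `1` wherever `f` is small and nonzero. If `f`
vanishes somewhere but not later, then `f` is small right after its last zero, and there `L ‖f‖`
would have to climb from `-∞` to a finite value in finite time. For `ω r = C * r * log (1 / r)` one
has `L r = -C⁻¹ * log (log (1 / r))` up to a constant, which does tend to `-∞`.
-/

open Filter MeasureTheory Set Topology

section Modulus

/-- Osgood's condition `∫₀^δ dr / ω(r) = ∞` for a modulus `ω` that is continuous and positive on
`(0, δ]`; divergence of the integral is expressed as non-integrability of `1 / ω`. It is the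
condition on the modulus of continuity of a vector field that makes integral curves unique. -/
structure IsOsgoodModulus (ω : ℝ → ℝ) (δ : ℝ) : Prop where
  continuousOn : ContinuousOn ω (Ioc 0 δ)
  pos : ∀ r ∈ Ioc 0 δ, 0 < ω r
  not_integrableOn_inv : ¬IntegrableOn (fun r => (ω r)⁻¹) (Ioc 0 δ)

/-- The primitive of `1 / ω` vanishing at `δ`: a change of variable after which a quantity growing
at rate at most `ω` grows at rate at most `1`. -/
noncomputable def osgoodPrimitive (ω : ℝ → ℝ) (δ r : ℝ) : ℝ :=
  ∫ s in δ..r, (ω s)⁻¹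

namespace IsOsgoodModulus

variable {ω : ℝ → ℝ} {δ r : ℝ}

theorem continuousOn_inv (hω : IsOsgoodModulus ω δ) :
    ContinuousOn (fun r => (ω r)⁻¹) (Ioc 0 δ) :=
  hω.continuousOn.inv₀ fun r hr => (hω.pos r hr).ne'

theorem integrableOn_inv_Ioc (hω : IsOsgoodModulus ω δ) (hr : 0 < r) :
    IntegrableOn (fun s => (ω s)⁻¹) (Ioc r δ) :=
  ((hω.continuousOn_inv.mono fun _ hs => ⟨hr.trans_le hs.1, hs.2⟩).integrableOn_Icc).mono_set
    Ioc_subset_Icc_self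

theorem hasDerivAt_osgoodPrimitive (hω : IsOsgoodModulus ω δ) (hr : r ∈ Ioo 0 δ) :
    HasDerivAt (osgoodPrimitive ω δ) (ω r)⁻¹ r := by
  have hint : IntervalIntegrable (fun s => (ω s)⁻¹) volume δ r :=
    ((intervalIntegrable_iff_integrableOn_Ioc_of_le hr.2.le).2
      (hω.integrableOn_inv_Ioc hr.1)).symm
  have hcont : ContinuousOn (fun s => (ω s)⁻¹) (Ioo 0 δ) :=
    hω.continuousOn_inv.mono Ioo_subset_Ioc_self
  exact intervalIntegral.integral_hasDerivAt_right hint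
    (hcont.stronglyMeasurableAtFilter isOpen_Ioo r hr) (hcont.continuousAt (Ioo_mem_nhds hr.1 hr.2))

theorem continuousOn_osgoodPrimitive (hω : IsOsgoodModulus ω δ) :
    ContinuousOn (osgoodPrimitive ω δ) (Ioo 0 δ) :=
  fun _ hr => (hω.hasDerivAt_osgoodPrimitive hr).continuousAt.continuousWithinAt

theorem monotoneOn_osgoodPrimitive (hω : IsOsgoodModulus ω δ) :
    MonotoneOn (osgoodPrimitive ω δ) (Ioo 0 δ) := by
  refine monotoneOn_of_hasDerivWithinAt_nonneg (f' := fun r => (ω r)⁻¹) (convex_Ioo 0 δ)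
    hω.continuousOn_osgoodPrimitive (fun r hr => ?_) fun r hr => ?_
  all_goals rw [interior_Ioo] at hr
  · exact (hω.hasDerivAt_osgoodPrimitive hr).hasDerivWithinAt
  · exact (inv_pos.2 (hω.pos r (Ioo_subset_Ioc_self hr))).le

theorem delta_pos (hω : IsOsgoodModulus ω δ) : 0 < δ := by
  by_contra! hδ
  exact hω.not_integrableOn_inv (by simp [Ioc_eq_empty hδ.not_gt])

theorem exists_osgoodPrimitive_lt (hω : IsOsgoodModulus ω δ) (M : ℝ) :
    ∃ r ∈ Ioo 0 δ, osgoodPrimitive ω δ r < M := by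
  by_contra! hM
  obtain ⟨u, -, hu, hu_lim⟩ := exists_seq_strictAnti_tendsto' hω.delta_pos
  refine hω.not_integrableOn_inv <| integrableOn_Ioc_of_intervalIntegral_norm_bounded_left
    (I := -M) (fun n => hω.integrableOn_inv_Ioc (hu n).1) hu_lim (.of_forall fun n => ?_)
  calc ∫ s in Ioc (u n) δ, ‖(ω s)⁻¹‖
      = ∫ s in Ioc (u n) δ, (ω s)⁻¹ := setIntegral_congr_fun measurableSet_Ioc fun s hs =>
        Real.norm_of_nonneg (inv_pos.2 (hω.pos s ⟨(hu n).1.trans hs.1, hs.2⟩)).le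
    _ = -osgoodPrimitive ω δ (u n) := by
        rw [osgoodPrimitive, intervalIntegral.integral_of_ge (hu n).2.le, neg_neg]
    _ ≤ -M := neg_le_neg (hM _ (hu n))

theorem tendsto_osgoodPrimitive_atBot (hω : IsOsgoodModulus ω δ) :
    Tendsto (osgoodPrimitive ω δ) (𝓝[>] 0) atBot := by
  refine tendsto_atBot.2 fun M => ?_
  obtain ⟨r, hr, hrM⟩ := hω.exists_osgoodPrimitive_lt M
  filter_upwards [Ioo_mem_nhdsGT hr.1] with s hs
  exact (hω.monotoneOn_osgoodPrimitive ⟨hs.1, hs.2.trans hr.2⟩ hr hs.2.le).trans hrM.le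

end IsOsgoodModulus

theorem hasDerivAt_log_log_inv {r : ℝ} (hlog : Real.log r ≠ 0) :
    HasDerivAt (fun r => Real.log (Real.log (1 / r))) (-(r * Real.log (1 / r))⁻¹) r := by
  have hr : r ≠ 0 := (Real.log_ne_zero.1 hlog).1
  simp only [one_div, Real.log_inv]
  refine ((Real.hasDerivAt_log hr).fun_neg.log (neg_ne_zero.2 hlog)).congr_deriv ?_
  field_simp

theorem tendsto_log_log_inv_nhdsGT_zero :
    Tendsto (fun r => Real.log (Real.log (1 / r))) (𝓝[>] 0) atTop := by
  simp only [one_div]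
  exact Real.tendsto_log_atTop.comp (Real.tendsto_log_atTop.comp tendsto_inv_nhdsGT_zero)

theorem isOsgoodModulus_mul_log {C δ : ℝ} (hC : 0 < C) (hδ : 0 < δ) (hδ₁ : δ < 1) :
    IsOsgoodModulus (fun r => C * r * Real.log (1 / r)) δ where
  continuousOn := by
    have hne : ∀ r ∈ Ioc 0 δ, r ≠ 0 := fun r hr => hr.1.ne'
    exact (continuousOn_const.mul continuousOn_id).mul
      ((continuousOn_const.div continuousOn_id hne).log fun r hr => one_div_ne_zero (hne r hr))
  pos r hr :=
    mul_pos (mul_pos hC hr.1) (Real.log_pos (one_lt_one_div hr.1 (hr.2.trans_lt hδ₁)))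
  not_integrableOn_inv := by
    have hderiv : ∀ᶠ r in 𝓝[>] (0 : ℝ), HasDerivAt (fun r => Real.log (Real.log (1 / r)))
        (-(r * Real.log (1 / r))⁻¹) r := by
      filter_upwards [Ioo_mem_nhdsGT one_pos] with r hr
      exact hasDerivAt_log_log_inv (Real.log_neg hr.1 hr.2).ne
    refine not_integrableOn_of_tendsto_norm_atTop_of_deriv_isBigO_filter (𝓝[>] 0)
      (Ioc_mem_nhdsGT hδ) (hderiv.mono fun r hr => hr.differentiableAt)
      (tendsto_norm_atTop_atTop.comp tendsto_log_log_inv_nhdsGT_zero) ?_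
    refine .of_bound C (hderiv.mono fun r hr => le_of_eq ?_)
    rw [hr.deriv, norm_neg, mul_assoc C r, mul_inv C, norm_mul, norm_inv C,
      Real.norm_of_nonneg hC.le, mul_inv_cancel_left₀ hC.ne']

end Modulus

section Comparison

theorem exists_last_eq {α : Type*} [TopologicalSpace α] [T1Space α] {f : ℝ → α} {a b : ℝ} {y : α}
    (hab : a ≤ b) (hf : ContinuousOn f (Icc a b)) (ha : f a = y) (hb : f b ≠ y) :
    ∃ c ∈ Ico a b, f c = y ∧ ∀ x ∈ Ioc c b, f x ≠ y := by
  have hcompact : IsCompact (Icc a b ∩ f ⁻¹' {y}) :=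
    isCompact_Icc.of_isClosed_subset
      (hf.preimage_isClosed_of_isClosed isClosed_Icc isClosed_singleton) inter_subset_left
  obtain ⟨c, ⟨hc, hfc⟩, hmax⟩ := hcompact.exists_isGreatest ⟨a, left_mem_Icc.2 hab, ha⟩
  have hcb : c ≠ b := ne_of_apply_ne f fun hfcb => hb (hfcb ▸ hfc)
  exact ⟨c, ⟨hc.1, hc.2.lt_of_ne hcb⟩, hfc, fun x hx hfx =>
    hx.1.not_ge (hmax ⟨⟨hc.1.trans hx.1.le, hx.2⟩, hfx⟩)⟩

variable {E : Type*} [NormedAddCommGroup E] [NormedSpace ℝ E] {f f' : ℝ → E} {a b : ℝ}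

theorem hasDerivWithinAt_norm_sub_Ici {y : E} (hf : HasDerivWithinAt f y (Ici a) a) :
    HasDerivWithinAt (fun z => ‖f z - f a‖) ‖y‖ (Ici a) a := by
  rw [← hasDerivWithinAt_Ioi_iff_Ici, hasDerivWithinAt_iff_tendsto_slope' self_notMem_Ioi] at hf ⊢
  refine hf.norm.congr' ?_
  filter_upwards [self_mem_nhdsWithin] with z hz
  rw [slope_def_module, slope_def_module, norm_smul, norm_inv,
    Real.norm_of_nonneg (sub_pos.2 hz).le, sub_self, norm_zero, sub_zero, smul_eq_mul]

theorem eventually_slope_comp_norm_lt {L : ℝ → ℝ} {L' r : ℝ} {s : Set ℝ} {y : E}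
    (hs : s ∈ 𝓝 ‖f a‖) (hmono : MonotoneOn L s) (hL : HasDerivAt L L' ‖f a‖)
    (hf : HasDerivWithinAt f y (Ici a) a) (hr : L' * ‖y‖ < r) :
    ∀ᶠ z in 𝓝[>] a, slope (fun z => L ‖f z‖) a z < r := by
  -- The norm need not be differentiable at `f a`, but `g` is right differentiable at
  -- `a` and bounds `‖f‖` from above, with equality at `a`.
  set g : ℝ → ℝ := fun z => ‖f a‖ + ‖f z - f a‖ with hg_def
  have hga : g a = ‖f a‖ := by simp [hg_def]
  have hg : HasDerivWithinAt g ‖y‖ (Ici a) a := (hasDerivWithinAt_norm_sub_Ici hf).const_add _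
  have hLg : HasDerivWithinAt (L ∘ g) (L' * ‖y‖) (Ioi a) a :=
    (hL.comp_hasDerivWithinAt_of_eq a hg hga.symm).Ioi_of_Ici
  have hfs : ∀ᶠ z in 𝓝[>] a, ‖f z‖ ∈ s := hf.Ioi_of_Ici.continuousWithinAt.norm hs
  have hgs : ∀ᶠ z in 𝓝[>] a, g z ∈ s := hg.Ioi_of_Ici.continuousWithinAt (hga.symm ▸ hs)
  have hslope : ∀ᶠ z in 𝓝[>] a, slope (L ∘ g) a z < r :=
    ((hasDerivWithinAt_iff_tendsto_slope' self_notMem_Ioi).1 hLg).eventually_lt_const hr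
  filter_upwards [hfs, hgs, hslope, self_mem_nhdsWithin] with z hfz hgz hlt hz
  have hle : L ‖f z‖ ≤ L (g z) := hmono hfz hgz (norm_le_norm_add_norm_sub' _ _)
  refine lt_of_le_of_lt ?_ hlt
  rw [slope_def_field, slope_def_field, Function.comp_apply, Function.comp_apply, hga]
  exact div_le_div_of_nonneg_right (sub_le_sub_right hle _) (sub_pos.2 hz).le

namespace IsOsgoodModulus

variable {ω : ℝ → ℝ} {δ : ℝ}

theorem osgoodPrimitive_norm_le_add (hω : IsOsgoodModulus ω δ) (hab : a ≤ b)
    (hf : ContinuousOn f (Icc a b)) (hf' : ∀ x ∈ Ico a b, HasDerivWithinAt f (f' x) (Ici x) x)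
    (hmem : ∀ x ∈ Icc a b, ‖f x‖ ∈ Ioo 0 δ) (bound : ∀ x ∈ Ico a b, ‖f' x‖ ≤ ω ‖f x‖) :
    osgoodPrimitive ω δ ‖f b‖ ≤ osgoodPrimitive ω δ ‖f a‖ + (b - a) := by
  refine image_le_of_liminf_slope_right_le_deriv_boundary
    (f := fun x => osgoodPrimitive ω δ ‖f x‖) (B := fun x => osgoodPrimitive ω δ ‖f a‖ + (x - a))
    (B' := fun _ => 1) (hω.continuousOn_osgoodPrimitive.comp hf.norm hmem) (by simp) (by fun_prop)
    (fun x _ => (((hasDerivAt_id x).sub_const a).const_add _).hasDerivWithinAt)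
    (fun x hx r hr => ?_) (right_mem_Icc.2 hab)
  have hx_mem := hmem x (Ico_subset_Icc_self hx)
  have hspeed : (ω ‖f x‖)⁻¹ * ‖f' x‖ ≤ 1 :=
    inv_mul_le_one_of_le₀ (bound x hx) (hω.pos _ (Ioo_subset_Ioc_self hx_mem)).le
  exact (eventually_slope_comp_norm_lt (Ioo_mem_nhds hx_mem.1 hx_mem.2)
    hω.monotoneOn_osgoodPrimitive (hω.hasDerivAt_osgoodPrimitive hx_mem) (hf' x hx)
    (hspeed.trans_lt hr)).frequently

theorem eq_zero_of_norm_deriv_right_le (hω : IsOsgoodModulus ω δ) (hab : a ≤ b)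
    (hf : ContinuousOn f (Icc a b)) (hf' : ∀ x ∈ Ico a b, HasDerivWithinAt f (f' x) (Ici x) x)
    (ha : f a = 0) (bound : ∀ x ∈ Ico a b, ‖f x‖ ∈ Ioo 0 δ → ‖f' x‖ ≤ ω ‖f x‖) :
    f b = 0 := by
  by_contra hb
  obtain ⟨c, hc, hfc, hne⟩ := exists_last_eq hab hf ha hb
  have hlim : Tendsto (fun x => ‖f x‖) (𝓝[>] c) (𝓝[>] 0) := by
    refine tendsto_nhdsWithin_iff.2 ⟨?_, ?_⟩
    · simpa [hfc] using (hf' c hc).Ioi_of_Ici.continuousWithinAt.norm.tendsto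
    · filter_upwards [Ioc_mem_nhdsGT hc.2] with x hx using norm_pos_iff.2 (hne x hx)
  obtain ⟨d, hcd, hd⟩ := mem_nhdsGT_iff_exists_Ioc_subset.1
    (inter_mem (Ioc_mem_nhdsGT hc.2) (hlim (Ioo_mem_nhdsGT hω.delta_pos)))
  have hlower : ∀ x ∈ Ioc c d,
      osgoodPrimitive ω δ ‖f d‖ ≤ osgoodPrimitive ω δ ‖f x‖ + (d - x) := by
    intro x hx
    have hsub : Icc x d ⊆ Ioc c d := fun y hy => ⟨hx.1.trans_le hy.1, hy.2⟩
    have hdb : d ≤ b := (hd (right_mem_Ioc.2 hcd)).1.2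
    have hax : a ≤ x := hc.1.trans hx.1.le
    have hIco : Ico x d ⊆ Ico a b := Ico_subset_Ico hax hdb
    have hsmall : ∀ y ∈ Icc x d, ‖f y‖ ∈ Ioo 0 δ := fun y hy => (hd (hsub hy)).2
    exact hω.osgoodPrimitive_norm_le_add hx.2 (hf.mono (Icc_subset_Icc hax hdb))
      (fun y hy => hf' y (hIco hy)) hsmall
      fun y hy => bound y (hIco hy) (hsmall y (Ico_subset_Icc_self hy))
  obtain ⟨x, hxL, hx⟩ := (((hω.tendsto_osgoodPrimitive_atBot.comp hlim).eventually_lt_atBot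
    (osgoodPrimitive ω δ ‖f d‖ - (d - c))).and (Ioc_mem_nhdsGT hcd)).exists
  simp only [Function.comp_apply] at hxL
  linarith [hlower x hx, hx.1]

end IsOsgoodModulus

end Comparison

section IntegralCurve

variable {E : Type*} [NormedAddCommGroup E] [NormedSpace ℝ E] {ω : ℝ → ℝ} {δ : ℝ}
  {v : ℝ → E → E} {U : ℝ → Set E} {s : Set ℝ} {γ₁ γ₂ : ℝ → E} {t₀ t₁ : ℝ}

theorem IsOsgoodModulus.eq_right_of_isIntegralCurveOn (hω : IsOsgoodModulus ω δ)
    (hv : ∀ t ∈ s, ∀ x ∈ U t, ∀ y ∈ U t, ‖x - y‖ ∈ Ioo 0 δ → ‖v t x - v t y‖ ≤ ω ‖x - y‖)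
    (hs : s.OrdConnected) (ht₀ : t₀ ∈ s) (ht₁ : t₁ ∈ s) (hle : t₀ ≤ t₁)
    (hγ₁U : ∀ t ∈ s, γ₁ t ∈ U t) (hγ₂U : ∀ t ∈ s, γ₂ t ∈ U t)
    (hγ₁ : IsIntegralCurveOn γ₁ v s) (hγ₂ : IsIntegralCurveOn γ₂ v s) (hinit : γ₁ t₀ = γ₂ t₀) :
    γ₁ t₁ = γ₂ t₁ := by
  have hsub : Icc t₀ t₁ ⊆ s := hs.out ht₀ ht₁
  refine sub_eq_zero.1 <| hω.eq_zero_of_norm_deriv_right_le (f := fun x => γ₁ x - γ₂ x)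
    (f' := fun x => v x (γ₁ x) - v x (γ₂ x)) hle
    ((hγ₁.continuousOn.sub hγ₂.continuousOn).mono hsub) (fun x hx => ?_) (sub_eq_zero.2 hinit)
    fun x hx => ?_
  all_goals have hxs : x ∈ s := hsub (Ico_subset_Icc_self hx)
  · exact ((hγ₁ x hxs).sub (hγ₂ x hxs)).mono_of_mem_nhdsWithin
      (mem_of_superset (Icc_mem_nhdsGE hx.2) (hs.out hxs ht₁))
  · exact hv x hxs _ (hγ₁U x hxs) _ (hγ₂U x hxs)

theorem logLipschitz_uniqueness_general (hω : IsOsgoodModulus ω δ)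
    (hv : ∀ t ∈ s, ∀ x ∈ U t, ∀ y ∈ U t, ‖x - y‖ ∈ Ioo 0 δ → ‖v t x - v t y‖ ≤ ω ‖x - y‖)
    (hs : s.OrdConnected) (ht₀ : t₀ ∈ s)
    (hγ₁U : ∀ t ∈ s, γ₁ t ∈ U t) (hγ₂U : ∀ t ∈ s, γ₂ t ∈ U t)
    (hγ₁ : IsIntegralCurveOn γ₁ v s) (hγ₂ : IsIntegralCurveOn γ₂ v s) (hinit : γ₁ t₀ = γ₂ t₀) :
    EqOn γ₁ γ₂ s := by
  intro t ht
  rcases le_total t₀ t with hle | hle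
  · exact hω.eq_right_of_isIntegralCurveOn hv hs ht₀ ht hle hγ₁U hγ₂U hγ₁ hγ₂ hinit
  · -- Time reversal: the curves `t ↦ γᵢ (-t)` are integral curves of `(t, x) ↦ -v (-t) x`.
    have hs_rev : {t | t * -1 ∈ s}.OrdConnected :=
      hs.preimage_anti fun x y hxy => mul_le_mul_of_nonpos_right hxy (by norm_num)
    have hrev := hω.eq_right_of_isIntegralCurveOn (U := fun t => U (t * -1)) (t₀ := -t₀) (t₁ := -t)
      (fun t ht x hx y hy hxy => ?_) hs_rev (by simpa using ht₀) (by simpa using ht)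
      (neg_le_neg hle) (fun t ht => hγ₁U _ ht) (fun t ht => hγ₂U _ ht) (hγ₁.comp_mul (-1))
      (hγ₂.comp_mul (-1)) (by simpa using hinit)
    · simpa using hrev
    · simpa [neg_add_eq_sub, norm_sub_rev] using hv _ ht x hx y hy hxy

end IntegralCurve

/-- Uniqueness of integral curves of a log-Lipschitz vector field: if
`‖X(a) − X(b)‖ ≤ C‖a − b‖·log(1/‖a − b‖)` whenever `0 < ‖a − b‖ ≤ 1/2`,
then two integral curves of `X` on an interval `I` agreeing at `t₀ ∈ I`
agree on all of `I`. -/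
theorem logLipschitz_uniqueness
    {E : Type*} [NormedAddCommGroup E] [NormedSpace ℝ E] [FiniteDimensional ℝ E]
    (U : Set E) (hU : IsOpen U) (C : ℝ) (hC : 0 < C) (X : E → E)
    (hX : ∀ a ∈ U, ∀ b ∈ U, 0 < ‖a - b‖ → ‖a - b‖ ≤ 1 / 2 →
      ‖X a - X b‖ ≤ C * ‖a - b‖ * Real.log (1 / ‖a - b‖))
    (I : Set ℝ) (hI : I.OrdConnected) (t₀ : ℝ) (ht₀ : t₀ ∈ I)
    (γ₁ γ₂ : ℝ → E)
    (hγ₁U : ∀ t ∈ I, γ₁ t ∈ U) (hγ₂U : ∀ t ∈ I, γ₂ t ∈ U)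
    (hγ₁ : ∀ t ∈ I, HasDerivAt γ₁ (X (γ₁ t)) t)
    (hγ₂ : ∀ t ∈ I, HasDerivAt γ₂ (X (γ₂ t)) t)
    (hinit : γ₁ t₀ = γ₂ t₀) :
    ∀ t ∈ I, γ₁ t = γ₂ t :=
  logLipschitz_uniqueness_general (v := fun _ => X) (U := fun _ => U)
    (isOsgoodModulus_mul_log hC one_half_pos one_half_lt_one)
    (fun _ _ a ha b hb hab => hX a ha b hb hab.1 hab.2.le) hI ht₀ hγ₁U hγ₂U
    (fun t ht => (hγ₁ t ht).hasDerivWithinAt) (fun t ht => (hγ₂ t ht).hasDerivWithinAt) hinit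
end

section
/- Let J ⊆ ℝ be an open interval, h : J → ℝ differentiable and everywhere positive, I ⊆ ℝ an interval, and v : I → ℝ a twice differentiable function with values in J. If v satisfies the geodesic equation 2·v''(u) = (1 + v'(u)²)·h'(v(u))/h(v(u)) for all u ∈ I, then the function u ↦ log(1 + v'(u)²) − log(h(v(u))) is constant on I. -/
/-!
The derivative of `log (1 + v'²) - H ∘ v` is `v' / (1 + v'²)` times the defect
`2 v'' - (1 + v'²) H'(v)` of the geodesic equation, that is, `v' / (1 + v'²)` is an integrating
factor. Along a geodesic the defect vanishes, and a function with zero derivative on an interval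
is constant. The conformal metric `h(v)(du² + dv²)` is the case `H = log h`.
-/

theorem eq_of_hasDerivWithinAt_zero {𝕜 G : Type*} [RCLike 𝕜] [NormedAddCommGroup G]
    [NormedSpace 𝕜 G] {f : 𝕜 → G} {s : Set 𝕜} (hs : Convex ℝ s)
    (hf : ∀ x ∈ s, HasDerivWithinAt f 0 s x) {x y : 𝕜} (hx : x ∈ s) (hy : y ∈ s) :
    f x = f y := by
  have hbound : ‖f x - f y‖ ≤ 0 * ‖x - y‖ :=
    hs.norm_image_sub_le_of_norm_hasDerivWithin_le hf (fun _ _ ↦ norm_zero.le) hy hx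
  rwa [zero_mul, norm_le_zero_iff, sub_eq_zero] at hbound

theorem hasDerivWithinAt_log_one_add_sq {p : ℝ → ℝ} {p' u : ℝ} {s : Set ℝ}
    (hp : HasDerivWithinAt p p' s u) :
    HasDerivWithinAt (fun t ↦ Real.log (1 + p t ^ 2)) (2 * p u * p' / (1 + p u ^ 2)) s u := by
  have hpos : 0 < 1 + p u ^ 2 := by positivity
  simpa using ((hp.fun_pow 2).const_add 1).log hpos.ne'

section

variable {I J : Set ℝ} {H h H' h' v v' v'' : ℝ → ℝ}

theorem hasDerivWithinAt_log_one_add_sq_sub_comp {u dH a : ℝ}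
    (hH : HasDerivWithinAt H dH J (v u)) (hv : HasDerivWithinAt v (v' u) I u)
    (hv' : HasDerivWithinAt v' a I u) (hvJ : Set.MapsTo v I J) :
    HasDerivWithinAt (fun t ↦ Real.log (1 + v' t ^ 2) - H (v t))
      (v' u / (1 + v' u ^ 2) * (2 * a - (1 + v' u ^ 2) * dH)) I u := by
  refine ((hasDerivWithinAt_log_one_add_sq hv').fun_sub (hH.comp u hv hvJ)).congr_deriv ?_
  field_simp

theorem log_one_add_sq_sub_comp_eq_of_geodesic (hI : I.OrdConnected)
    (hH : ∀ x ∈ J, HasDerivWithinAt H (H' x) J x)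
    (hv : ∀ u ∈ I, HasDerivWithinAt v (v' u) I u)
    (hv' : ∀ u ∈ I, HasDerivWithinAt v' (v'' u) I u) (hvJ : Set.MapsTo v I J)
    (hgeo : ∀ u ∈ I, 2 * v'' u = (1 + v' u ^ 2) * H' (v u))
    {u₁ u₂ : ℝ} (hu₁ : u₁ ∈ I) (hu₂ : u₂ ∈ I) :
    Real.log (1 + v' u₁ ^ 2) - H (v u₁) = Real.log (1 + v' u₂ ^ 2) - H (v u₂) := by
  refine eq_of_hasDerivWithinAt_zero (f := fun t ↦ Real.log (1 + v' t ^ 2) - H (v t))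
    hI.convex (fun u hu ↦ ?_) hu₁ hu₂
  have hderiv := hasDerivWithinAt_log_one_add_sq_sub_comp (hH (v u) (hvJ hu)) (hv u hu)
    (hv' u hu) hvJ
  rwa [hgeo u hu, sub_self, mul_zero] at hderiv

theorem geodesic_first_integral_general (hI : I.OrdConnected)
    (hh : ∀ x ∈ J, HasDerivWithinAt h (h' x) J x) (hh_pos : ∀ x ∈ J, 0 < h x)
    (hv : ∀ u ∈ I, HasDerivWithinAt v (v' u) I u)
    (hv' : ∀ u ∈ I, HasDerivWithinAt v' (v'' u) I u) (hvJ : Set.MapsTo v I J)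
    (hgeo : ∀ u ∈ I, 2 * v'' u = (1 + v' u ^ 2) * h' (v u) / h (v u))
    {u₁ u₂ : ℝ} (hu₁ : u₁ ∈ I) (hu₂ : u₂ ∈ I) :
    Real.log (1 + v' u₁ ^ 2) - Real.log (h (v u₁)) =
      Real.log (1 + v' u₂ ^ 2) - Real.log (h (v u₂)) := by
  have hlog : ∀ x ∈ J, HasDerivWithinAt (fun x ↦ Real.log (h x)) (h' x / h x) J x :=
    fun x hx ↦ (hh x hx).log (hh_pos x hx).ne'
  have hgeo_log : ∀ u ∈ I, 2 * v'' u = (1 + v' u ^ 2) * (h' (v u) / h (v u)) :=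
    fun u hu ↦ (hgeo u hu).trans (mul_div_assoc _ _ _)
  exact log_one_add_sq_sub_comp_eq_of_geodesic (H' := fun x ↦ h' x / h x)
    hI hlog hv hv' hvJ hgeo_log hu₁ hu₂

end

/-- First integral of the geodesic equation for the conformal metric
`ds² = h(v)(du² + dv²)`: if `2 v'' = (1 + v'²) h'(v)/h(v)` on an interval `I`,
then `log(1 + v'²) − log(h(v))` is constant on `I`. -/
theorem geodesic_first_integral
    (J : Set ℝ) (hJ_open : IsOpen J) (hJ_conn : J.OrdConnected)
    (h h' : ℝ → ℝ)
    (hh : ∀ x ∈ J, HasDerivAt h (h' x) x)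
    (hh_pos : ∀ x ∈ J, 0 < h x)
    (I : Set ℝ) (hI : I.OrdConnected)
    (v v' v'' : ℝ → ℝ)
    (hv : ∀ u ∈ I, HasDerivAt v (v' u) u)
    (hv' : ∀ u ∈ I, HasDerivAt v' (v'' u) u)
    (hvJ : ∀ u ∈ I, v u ∈ J)
    (hgeo : ∀ u ∈ I, 2 * v'' u = (1 + (v' u) ^ 2) * h' (v u) / h (v u)) :
    ∀ u₁ ∈ I, ∀ u₂ ∈ I,
      Real.log (1 + (v' u₁) ^ 2) - Real.log (h (v u₁)) =
        Real.log (1 + (v' u₂) ^ 2) - Real.log (h (v u₂)) := by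
  intro u₁ hu₁ u₂ hu₂
  exact geodesic_first_integral_general hI (fun x hx ↦ (hh x hx).hasDerivWithinAt) hh_pos
    (fun u hu ↦ (hv u hu).hasDerivWithinAt) (fun u hu ↦ (hv' u hu).hasDerivWithinAt) hvJ hgeo
    hu₁ hu₂
end

section
/- Fix an integer k ≥ 1 and define h : ℝ → ℝ by h(x) = 1 + (2k+1)²·|x|^{4k/(2k+1)} (real power of |x|). Then h is differentiable on ℝ and positive, and both functions v₁(u) = 0 and v₂(u) = u^{2k+1} are twice differentiable on ℝ and satisfy the geodesic equation 2·v''(u) = (1 + v'(u)²)·h'(v(u))/h(v(u)) for all u ∈ ℝ. Moreover v₁(0) = v₂(0) = 0 and v₁'(0) = v₂'(0) = 0, while v₁ ≠ v₂; in particular solutions of this second-order equation with given initial position and velocity are not unique. -/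
/-!
Clairaut's relation for the metric `h(v) (du² + dv²)` says that `h(v) / (1 + v'²)` is constant
along a geodesic `v = v(u)`. Conversely, differentiating `h(v) = E (1 + v'²)` gives
`h'(v) v' = 2 E v' v''`, which is the geodesic equation wherever `v' ≠ 0`; by continuity it then
holds everywhere as soon as `v` is constant on no interval. The conformal factor
`h(x) = 1 + (m + 1)² |x| ^ (2m / (m + 1))` is chosen so that `v(u) = u ^ (m + 1)` satisfies
Clairaut's relation with `E = 1`. Since `0` is a critical point of this `h`, the line `v = 0` is a
geodesic too, and it is tangent to the curve `v = u ^ (m + 1)` at the origin.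
-/

open Filter Topology

/-- The graph `v = v(u)` is a geodesic, up to parametrization, of the conformal metric
`h(v) (du² + dv²)`. Differentiability of `v` and `v'` is required explicitly because `deriv` is `0`
where it fails. -/
structure IsGraphGeodesic (h v : ℝ → ℝ) : Prop where
  differentiable : Differentiable ℝ v
  differentiable_deriv : Differentiable ℝ (deriv v)
  two_mul_deriv_deriv (u : ℝ) :
    2 * deriv (deriv v) u = (1 + deriv v u ^ 2) * deriv h (v u) / h (v u)

/-- The conformal factor for which the curve `v = u ^ (m + 1)` satisfies Clairaut's relation
`h(v) = 1 + v'²`. -/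
noncomputable def powerConformalFactor (m : ℕ) (x : ℝ) : ℝ :=
  1 + ((m : ℝ) + 1) ^ 2 * |x| ^ (2 * (m : ℝ) / ((m : ℝ) + 1))

section Clairaut

variable {h v : ℝ → ℝ} {E : ℝ}

theorem isGraphGeodesic_const {c : ℝ} (hc : deriv h c = 0) : IsGraphGeodesic h fun _ => c where
  differentiable := differentiable_const c
  differentiable_deriv := by
    rw [deriv_const']
    exact differentiable_const 0
  two_mul_deriv_deriv u := by simp [hc]

theorem deriv_eq_two_mul_deriv_deriv_of_clairaut {u : ℝ} (hh : DifferentiableAt ℝ h (v u))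
    (hv' : DifferentiableAt ℝ (deriv v) u)
    (hE : ∀ᶠ y in 𝓝 u, h (v y) = E * (1 + deriv v y ^ 2)) (hu : deriv v u ≠ 0) :
    deriv h (v u) = 2 * E * deriv (deriv v) u := by
  have hv : DifferentiableAt ℝ v u := differentiableAt_of_deriv_ne_zero hu
  have hleft : HasDerivAt (fun y => h (v y)) (deriv h (v u) * deriv v u) u :=
    hh.hasDerivAt.comp u hv.hasDerivAt
  have hright := (((hv'.hasDerivAt.pow 2).const_add 1).const_mul E).congr_of_eventuallyEq hE
  apply mul_right_cancel₀ hu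
  calc deriv h (v u) * deriv v u
      = E * (2 * deriv v u * deriv (deriv v) u) := by simpa using hleft.unique hright
    _ = 2 * E * deriv (deriv v) u * deriv v u := by ring

theorem isGraphGeodesic_of_clairaut (hh : ContDiff ℝ 1 h) (hv : ContDiff ℝ 2 v)
    (hne : ∀ u, h (v u) ≠ 0) (hE : ∀ u, h (v u) = E * (1 + deriv v u ^ 2))
    (hdense : Dense {u | deriv v u ≠ 0}) : IsGraphGeodesic h v where
  differentiable := hv.differentiable two_ne_zero
  differentiable_deriv := hv.differentiable_deriv_two
  two_mul_deriv_deriv u := by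
    have hcont_h : Continuous fun u => deriv h (v u) := hh.continuous_deriv_one.comp hv.continuous
    have hcont_v : Continuous (deriv (deriv v)) := hv.deriv'.continuous_deriv_one
    have hderiv : deriv h (v u) = 2 * E * deriv (deriv v) u :=
      congrFun (hcont_h.ext_on hdense (hcont_v.const_mul (2 * E)) fun y hy =>
        deriv_eq_two_mul_deriv_deriv_of_clairaut (hh.differentiable one_ne_zero _)
          (hv.differentiable_deriv_two y) (.of_forall hE) hy) u
    rw [eq_div_iff (hne u), hderiv, hE u]
    ring

end Clairaut

section Power

variable {m : ℕ}

theorem one_lt_two_mul_div_add_one (hm : 2 ≤ m) : 1 < 2 * (m : ℝ) / ((m : ℝ) + 1) := by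
  have two_le : (2 : ℝ) ≤ m := Nat.ofNat_le_cast.mpr hm
  rw [lt_div_iff₀ (by positivity)]
  linarith

theorem powerConformalFactor_pos (m : ℕ) (x : ℝ) : 0 < powerConformalFactor m x := by
  unfold powerConformalFactor
  positivity

theorem contDiff_powerConformalFactor (hm : 2 ≤ m) : ContDiff ℝ 1 (powerConformalFactor m) :=
  contDiff_const.add (contDiff_const.mul (contDiff_norm_rpow (one_lt_two_mul_div_add_one hm)))

theorem deriv_powerConformalFactor_zero (hm : 2 ≤ m) : deriv (powerConformalFactor m) 0 = 0 := by
  have habs := hasDerivAt_abs_rpow 0 (one_lt_two_mul_div_add_one hm)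
  have hfactor : HasDerivAt (powerConformalFactor m) _ 0 :=
    (habs.const_mul (((m : ℝ) + 1) ^ 2)).const_add 1
  simpa using hfactor.deriv

theorem deriv_pow_add_one (m : ℕ) (u : ℝ) :
    deriv (fun u : ℝ => u ^ (m + 1)) u = ((m : ℝ) + 1) * u ^ m := by
  simp

theorem abs_pow_rpow_div (u a : ℝ) {n : ℕ} (hn : n ≠ 0) : |u ^ n| ^ (a / n) = |u| ^ a := by
  rw [abs_pow, ← Real.rpow_natCast_mul (abs_nonneg u), mul_div_cancel₀ a (Nat.cast_ne_zero.mpr hn)]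

theorem powerConformalFactor_pow (m : ℕ) (u : ℝ) :
    powerConformalFactor m (u ^ (m + 1)) = 1 + deriv (fun u : ℝ => u ^ (m + 1)) u ^ 2 := by
  have hpow : |u ^ (m + 1)| ^ (2 * (m : ℝ) / ((m : ℝ) + 1)) = (u ^ m) ^ 2 := by
    calc |u ^ (m + 1)| ^ (2 * (m : ℝ) / ((m : ℝ) + 1))
        = |u| ^ (2 * (m : ℝ)) := by exact_mod_cast abs_pow_rpow_div u (2 * m) m.succ_ne_zero
      _ = |u| ^ (2 * m) := by exact_mod_cast Real.rpow_natCast |u| (2 * m)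
      _ = (u ^ m) ^ 2 := by rw [(even_two_mul m).pow_abs, pow_mul']
  rw [powerConformalFactor, hpow, deriv_pow_add_one, mul_pow]

theorem dense_deriv_pow_add_one_ne_zero (m : ℕ) :
    Dense {u : ℝ | deriv (fun u : ℝ => u ^ (m + 1)) u ≠ 0} := by
  refine (dense_compl_singleton (0 : ℝ)).mono fun u hu => ?_
  rw [Set.mem_ofPred_eq, deriv_pow_add_one]
  exact mul_ne_zero m.cast_add_one_ne_zero (pow_ne_zero m hu)

theorem isGraphGeodesic_pow_add_one (hm : 2 ≤ m) :
    IsGraphGeodesic (powerConformalFactor m) fun u => u ^ (m + 1) :=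
  isGraphGeodesic_of_clairaut (E := 1) (contDiff_powerConformalFactor hm) (contDiff_id.pow (m + 1))
    (fun _ => (powerConformalFactor_pos m _).ne')
    (fun u => by rw [powerConformalFactor_pow, one_mul]) (dense_deriv_pow_add_one_ne_zero m)

end Power

theorem branching_geodesics_power_general (m : ℕ) (hm : 2 ≤ m) :
    let h := powerConformalFactor m
    let v₁ : ℝ → ℝ := fun _ => 0
    let v₂ : ℝ → ℝ := fun u => u ^ (m + 1)
    Differentiable ℝ h ∧ (∀ x : ℝ, 0 < h x) ∧ IsGraphGeodesic h v₁ ∧ IsGraphGeodesic h v₂ ∧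
    v₁ 0 = 0 ∧ v₂ 0 = 0 ∧ deriv v₁ 0 = 0 ∧ deriv v₂ 0 = 0 ∧ v₁ ≠ v₂ := by
  intro h v₁ v₂
  have hv₂ : deriv v₂ 0 = 0 := by
    rw [deriv_pow_add_one, zero_pow (by lia), mul_zero]
  have hne : v₁ ≠ v₂ := fun heq => by simpa [v₁, v₂] using congrFun heq 1
  exact ⟨(contDiff_powerConformalFactor hm).differentiable one_ne_zero, powerConformalFactor_pos m,
    isGraphGeodesic_const (deriv_powerConformalFactor_zero hm), isGraphGeodesic_pow_add_one hm,
    rfl, zero_pow m.succ_ne_zero, deriv_const 0 0, hv₂, hne⟩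

/-- Branching geodesics, first family of examples: for
`h(x) = 1 + (2k+1)²|x|^{4k/(2k+1)}`, the functions `v₁ ≡ 0` and
`v₂(u) = u^{2k+1}` are two distinct twice differentiable solutions of the
geodesic equation `2 v'' = (1 + v'²) h'(v)/h(v)` with the same initial
position and velocity at `u = 0`. -/
theorem branching_geodesics_power (k : ℕ) (hk : 1 ≤ k) :
    let h : ℝ → ℝ := fun x => 1 + (2 * (k : ℝ) + 1) ^ 2 *
      |x| ^ ((4 * (k : ℝ)) / (2 * (k : ℝ) + 1))
    let v₁ : ℝ → ℝ := fun _ => 0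
    let v₂ : ℝ → ℝ := fun u => u ^ (2 * k + 1)
    Differentiable ℝ h ∧ (∀ x : ℝ, 0 < h x) ∧
    Differentiable ℝ v₁ ∧ Differentiable ℝ (deriv v₁) ∧
    Differentiable ℝ v₂ ∧ Differentiable ℝ (deriv v₂) ∧
    (∀ u : ℝ, 2 * deriv (deriv v₁) u =
      (1 + (deriv v₁ u) ^ 2) * deriv h (v₁ u) / h (v₁ u)) ∧
    (∀ u : ℝ, 2 * deriv (deriv v₂) u =
      (1 + (deriv v₂ u) ^ 2) * deriv h (v₂ u) / h (v₂ u)) ∧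
    v₁ 0 = 0 ∧ v₂ 0 = 0 ∧ deriv v₁ 0 = 0 ∧ deriv v₂ 0 = 0 ∧ v₁ ≠ v₂ := by
  intro h v₁ v₂
  have hh : powerConformalFactor (2 * k) = h := by
    ext x
    simp only [powerConformalFactor, h]
    push_cast
    ring_nf
  obtain ⟨hdiff, hpos, hgeo₁, hgeo₂, hjet⟩ :=
    hh ▸ branching_geodesics_power_general (2 * k) (by lia)
  exact ⟨hdiff, hpos, hgeo₁.differentiable, hgeo₁.differentiable_deriv, hgeo₂.differentiable,
    hgeo₂.differentiable_deriv, hgeo₁.two_mul_deriv_deriv, hgeo₂.two_mul_deriv_deriv, hjet⟩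
end

section
/- Fix an integer k ≥ 1. Define h : (−1,1) → ℝ by h(0) = 1 and h(x) = 1 + k²·(log(1/|x|))^{2+2/k}·x² for 0 < |x| < 1, and define v₂ : (−1,1) → ℝ by v₂(0) = 0 and v₂(u) = sgn(u)·exp(−1/|u|^k) for u ≠ 0. Then h is differentiable and positive on (−1,1), v₂ takes values in (−1,1), both v₁(u) = 0 and v₂ are twice differentiable on (−1,1) and satisfy the geodesic equation 2·v''(u) = (1 + v'(u)²)·h'(v(u))/h(v(u)) for all u ∈ (−1,1), and v₁(0) = v₂(0) = 0, v₁'(0) = v₂'(0) = 0 while v₁ ≠ v₂. -/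
/-!
For the metric `h(v) (du² + dv²)` Clairaut's relation says that `h(v) / (1 + v'²)` is constant
along a graph geodesic, and differentiating it gives back the geodesic equation wherever `v' ≠ 0`.
The factor `h` is chosen so that `v₂` satisfies this relation with constant `1`: since
`log (1 / |v₂|) = 1 / |u|ᵏ`, the value `h(v₂) - 1` is `(k |v₂| / |u|ᵏ⁺¹)² = v₂'²`.
The only point with `v₂' = 0` is the origin, where both sides of the equation are zero: `v₂` is flat
there, and `h(x) - 1 = o(x)`.
-/

open Filter Topology Asymptotics Set

section Geodesics

/-- The equation of a graph geodesic `v = v(u)` of the conformal metric `h(v) (du² + dv²)`, at the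
parameter `u`. Differentiability of `v`, `v'` and `h` is not part of it and has to be required
separately, `deriv` being zero where it fails. -/
def GeodesicEquationAt (h v : ℝ → ℝ) (u : ℝ) : Prop :=
  2 * deriv (deriv v) u = (1 + deriv v u ^ 2) * deriv h (v u) / h (v u)

variable {h v : ℝ → ℝ} {u : ℝ}

theorem GeodesicEquationAt.of_deriv_eq_zero (hv : deriv (deriv v) u = 0)
    (hh : deriv h (v u) = 0) : GeodesicEquationAt h v u := by
  simp [GeodesicEquationAt, hv, hh]

theorem GeodesicEquationAt.of_clairaut {c : ℝ} (hc : c ≠ 0) (hv : deriv v u ≠ 0)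
    (hv' : DifferentiableAt ℝ (deriv v) u) (hh : DifferentiableAt ℝ h (v u))
    (hclairaut : h ∘ v =ᶠ[𝓝 u] fun x => c * (1 + deriv v x ^ 2)) :
    GeodesicEquationAt h v u := by
  have hvu : DifferentiableAt ℝ v u := differentiableAt_of_deriv_ne_zero hv
  have hlhs : HasDerivAt (h ∘ v) (deriv h (v u) * deriv v u) u :=
    hh.hasDerivAt.comp u hvu.hasDerivAt
  have hrhs := ((hv'.hasDerivAt.fun_pow 2).const_add 1).const_mul c
  have hdiff := hlhs.unique (hrhs.congr_of_eventuallyEq hclairaut)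
  have hh' : deriv h (v u) = c * (2 * deriv (deriv v) u) := by
    apply mul_right_cancel₀ hv
    rw [hdiff]
    ring
  have hhu : h (v u) = c * (1 + deriv v u ^ 2) := hclairaut.eq_of_nhds
  have hpos : 1 + deriv v u ^ 2 ≠ 0 := by positivity
  rw [GeodesicEquationAt, hh', hhu]
  field_simp

end Geodesics

theorem hasDerivAt_zero_of_norm_sub_le_comp_abs {E : Type*} [NormedAddCommGroup E]
    [NormedSpace ℝ E] {f : ℝ → E} {g : ℝ → ℝ} (hg : g =o[𝓝[>] 0] fun t => t)
    (hfg : ∀ᶠ x in 𝓝[≠] 0, ‖f x - f 0‖ ≤ ‖g |x|‖) : HasDerivAt f 0 0 := by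
  have hbound : (fun x => f x - f 0) =O[𝓝[≠] 0] (g ∘ abs) := .of_bound' hfg
  have hne : (fun x => f x - f 0) =o[𝓝[≠] 0] fun x : ℝ => x :=
    (hbound.trans_isLittleO (hg.comp_tendsto tendsto_abs_nhdsNE_zero)).of_abs_right
  have hnhds := hne.sup (isLittleO_pure.2 (sub_self (f 0)))
  rw [nhdsNE_sup_pure] at hnhds
  simpa [hasDerivAt_iff_isLittleO] using hnhds

theorem hasDerivAt_sign_mul_comp_abs {f : ℝ → ℝ} {f' u : ℝ} (hu : u ≠ 0)
    (hf : HasDerivAt f f' |u|) : HasDerivAt (fun x => Real.sign x * f |x|) f' u := by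
  rcases hu.lt_or_gt with hneg | hpos
  · rw [abs_of_neg hneg] at hf
    have hodd : HasDerivAt (fun x => -f (-x)) f' u := by
      simpa using (hf.comp u (hasDerivAt_neg u)).fun_neg
    refine hodd.congr_of_eventuallyEq ?_
    filter_upwards [Iio_mem_nhds hneg] with x (hx : x < 0)
    rw [Real.sign_of_neg hx, abs_of_neg hx, neg_one_mul]
  · rw [abs_of_pos hpos] at hf
    refine hf.congr_of_eventuallyEq ?_
    filter_upwards [Ioi_mem_nhds hpos] with x (hx : 0 < x)
    rw [Real.sign_of_pos hx, abs_of_pos hx, one_mul]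

theorem isLittleO_exp_neg_one_div_rpow {a : ℝ} (ha : 0 < a) (s : ℝ) :
    (fun t : ℝ => Real.exp (-(1 / t ^ a))) =o[𝓝[>] 0] fun t => t ^ s := by
  have htop : Tendsto (fun t : ℝ => t ^ (-a)) (𝓝[>] 0) atTop :=
    tendsto_rpow_neg_nhdsGT_zero (neg_lt_zero.2 ha)
  refine ((isLittleO_exp_neg_mul_rpow_atTop one_pos (-s / a)).comp_tendsto htop).congr' ?_ ?_
  · filter_upwards [self_mem_nhdsWithin] with t ht
    simp [Real.rpow_neg (mem_Ioi.1 ht).le]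
  · filter_upwards [self_mem_nhdsWithin] with t ht
    rw [Function.comp_apply, ← Real.rpow_mul (mem_Ioi.1 ht).le]
    congr 1
    field_simp

theorem hasDerivAt_exp_neg_one_div_rpow (a : ℝ) {t : ℝ} (ht : 0 < t) :
    HasDerivAt (fun s : ℝ => Real.exp (-(1 / s ^ a)))
      (a / t ^ (a + 1) * Real.exp (-(1 / t ^ a))) t := by
  have hinv : HasDerivAt (fun s : ℝ => 1 / s ^ a) (-(a / t ^ (a + 1))) t := by
    have hrpow := Real.hasDerivAt_rpow_const (p := -a) (Or.inl ht.ne')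
    refine (hrpow.congr_of_eventuallyEq ?_).congr_deriv ?_
    · filter_upwards [Ioi_mem_nhds ht] with s hs
      rw [Real.rpow_neg (mem_Ioi.1 hs).le, one_div]
    · rw [← neg_add', Real.rpow_neg ht.le]
      ring
  exact hinv.fun_neg.exp.congr_deriv (by ring)

section OddFlatExp

/-- The curve `v₂(u) = sgn(u) exp(-1 / |u|ᵃ)` with a real exponent `a`. Its value at `0` is `0`
because `Real.sign 0 = 0`. -/
noncomputable def oddFlatExp (a : ℝ) : ℝ → ℝ := fun u => Real.sign u * Real.exp (-(1 / |u| ^ a))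

/-- The derivative of `oddFlatExp a`. For `a ≠ -1` its value at `0` is `0` because `a / 0 = 0`. -/
noncomputable def oddFlatExpDeriv (a : ℝ) : ℝ → ℝ := fun u =>
  a / |u| ^ (a + 1) * Real.exp (-(1 / |u| ^ a))

variable {a u : ℝ}

theorem oddFlatExp_natCast (k : ℕ) :
    oddFlatExp k = fun u => Real.sign u * Real.exp (-(1 / |u| ^ k)) := by
  funext u
  rw [oddFlatExp, Real.rpow_natCast]

theorem oddFlatExp_zero (a : ℝ) : oddFlatExp a 0 = 0 := by
  simp [oddFlatExp]

theorem abs_oddFlatExp (a : ℝ) (hu : u ≠ 0) : |oddFlatExp a u| = Real.exp (-(1 / |u| ^ a)) := by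
  rcases Real.sign_apply_eq_of_ne_zero u hu with h | h <;> simp [oddFlatExp, h]

theorem oddFlatExp_ne_zero (a : ℝ) (hu : u ≠ 0) : oddFlatExp a u ≠ 0 := by
  rw [← abs_pos, abs_oddFlatExp a hu]
  exact Real.exp_pos _

theorem abs_oddFlatExp_lt_one (a u : ℝ) : |oddFlatExp a u| < 1 := by
  rcases eq_or_ne u 0 with rfl | hu
  · simp [oddFlatExp_zero]
  · have := abs_pos.2 hu
    rw [abs_oddFlatExp a hu, Real.exp_lt_one_iff, neg_lt_zero]
    positivity

theorem oddFlatExpDeriv_zero (ha : 0 < a) : oddFlatExpDeriv a 0 = 0 := by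
  simp [oddFlatExpDeriv, Real.zero_rpow (add_pos ha one_pos).ne']

theorem oddFlatExpDeriv_pos (ha : 0 < a) (hu : u ≠ 0) : 0 < oddFlatExpDeriv a u := by
  have := abs_pos.2 hu
  unfold oddFlatExpDeriv
  positivity

theorem hasDerivAt_oddFlatExp_zero (ha : 0 < a) : HasDerivAt (oddFlatExp a) 0 0 := by
  refine hasDerivAt_zero_of_norm_sub_le_comp_abs
    (by simpa using isLittleO_exp_neg_one_div_rpow ha 1) ?_
  filter_upwards [self_mem_nhdsWithin] with u hu
  simp [oddFlatExp_zero, abs_oddFlatExp a hu]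

theorem hasDerivAt_oddFlatExp (ha : 0 < a) (u : ℝ) :
    HasDerivAt (oddFlatExp a) (oddFlatExpDeriv a u) u := by
  rcases eq_or_ne u 0 with rfl | hu
  · rw [oddFlatExpDeriv_zero ha]
    exact hasDerivAt_oddFlatExp_zero ha
  · exact hasDerivAt_sign_mul_comp_abs hu (hasDerivAt_exp_neg_one_div_rpow a (abs_pos.2 hu))

theorem deriv_oddFlatExp (ha : 0 < a) : deriv (oddFlatExp a) = oddFlatExpDeriv a :=
  funext fun u => (hasDerivAt_oddFlatExp ha u).deriv

theorem hasDerivAt_oddFlatExpDeriv_zero (ha : 0 < a) : HasDerivAt (oddFlatExpDeriv a) 0 0 := by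
  have hflat : (fun t : ℝ => a / t ^ (a + 1) * Real.exp (-(1 / t ^ a))) =o[𝓝[>] 0] fun t => t := by
    refine ((isBigO_refl (fun t : ℝ => a / t ^ (a + 1)) _).mul_isLittleO
      (isLittleO_exp_neg_one_div_rpow ha (a + 2))).trans_isBigO (.of_bound |a| ?_)
    filter_upwards [self_mem_nhdsWithin] with t (ht : 0 < t)
    have hpow : t ^ (a + 2) = t ^ (a + 1) * t := by
      rw [← Real.rpow_add_one ht.ne']
      ring_nf
    have : a / t ^ (a + 1) * t ^ (a + 2) = a * t := by
      rw [hpow]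
      field_simp
    simp [this]
  refine hasDerivAt_zero_of_norm_sub_le_comp_abs hflat (.of_forall fun u => ?_)
  rw [oddFlatExpDeriv_zero ha, sub_zero, oddFlatExpDeriv]

theorem differentiable_oddFlatExpDeriv (ha : 0 < a) : Differentiable ℝ (oddFlatExpDeriv a) := by
  intro u
  rcases eq_or_ne u 0 with rfl | hu
  · exact (hasDerivAt_oddFlatExpDeriv_zero ha).differentiableAt
  have hpos : 0 < |u| := abs_pos.2 hu
  have hrpow : DifferentiableAt ℝ (fun t : ℝ => t ^ (a + 1)) |u| :=
    (Real.hasDerivAt_rpow_const (Or.inl hpos.ne')).differentiableAt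
  have hprofile : DifferentiableAt ℝ
      (fun t : ℝ => a / t ^ (a + 1) * Real.exp (-(1 / t ^ a))) |u| :=
    ((differentiableAt_const a).fun_div hrpow (by positivity)).fun_mul
      (hasDerivAt_exp_neg_one_div_rpow a hpos).differentiableAt
  exact hprofile.comp u (hasDerivAt_abs hu).differentiableAt

end OddFlatExp

section LogConformalFactor

/-- The conformal factor `h(x) = 1 + c (log (1 / |x|))ᵖ x²`. Its value at `0` is `1` because of the
factor `x²`; it is meant for `|x| < 1`, where the base of the real power is nonnegative. -/
noncomputable def logConformalFactor (c p : ℝ) : ℝ → ℝ := fun x =>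
  1 + c * Real.log (1 / |x|) ^ p * x ^ 2

variable {c x : ℝ}

theorem logConformalFactor_zero (c p : ℝ) : logConformalFactor c p 0 = 1 := by
  simp [logConformalFactor]

theorem logConformalFactor_pos (hc : 0 ≤ c) (p : ℝ) (hx : |x| ≤ 1) :
    0 < logConformalFactor c p x := by
  have hlog : 0 ≤ Real.log (1 / |x|) := by
    rw [one_div, Real.log_inv]
    exact neg_nonneg.2 (Real.log_nonpos (abs_nonneg x) hx)
  unfold logConformalFactor
  positivity

theorem isLittleO_log_one_div_rpow_mul_sq (p : ℝ) :
    (fun t : ℝ => Real.log (1 / t) ^ p * t ^ 2) =o[𝓝[>] 0] fun t => t := by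
  refine ((isLittleO_abs_log_rpow_rpow_nhdsGT_zero p neg_one_lt_zero).mul_isBigO
    (isBigO_refl (fun t : ℝ => t ^ 2) _)).congr' ?_ ?_
  · filter_upwards [Ioc_mem_nhdsGT one_pos] with t ht
    rw [one_div, Real.log_inv, abs_of_nonpos (Real.log_nonpos ht.1.le ht.2)]
  · filter_upwards [self_mem_nhdsWithin] with t (ht : 0 < t)
    rw [Real.rpow_neg_one]
    field_simp

theorem hasDerivAt_logConformalFactor_zero (c p : ℝ) :
    HasDerivAt (logConformalFactor c p) 0 0 := by
  refine hasDerivAt_zero_of_norm_sub_le_comp_abs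
    ((isLittleO_log_one_div_rpow_mul_sq p).const_mul_left c) (.of_forall fun x => ?_)
  rw [logConformalFactor_zero, logConformalFactor, add_sub_cancel_left, sq_abs, mul_assoc]

theorem differentiableAt_logConformalFactor (c p : ℝ) (hx : |x| < 1) :
    DifferentiableAt ℝ (logConformalFactor c p) x := by
  rcases eq_or_ne x 0 with rfl | hx0
  · exact (hasDerivAt_logConformalFactor_zero c p).differentiableAt
  have hpos : 0 < |x| := abs_pos.2 hx0
  have habs : DifferentiableAt ℝ (fun y : ℝ => |y|) x := (hasDerivAt_abs hx0).differentiableAt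
  have hlog : DifferentiableAt ℝ (fun y : ℝ => Real.log (1 / |y|)) x :=
    ((differentiableAt_const 1).fun_div habs hpos.ne').log (by positivity)
  have hlog0 : Real.log (1 / |x|) ≠ 0 := (Real.log_pos ((one_lt_div hpos).2 hx)).ne'
  exact (((hlog.rpow_const (Or.inl hlog0)).const_mul c).fun_mul
    (differentiableAt_pow 2)).const_add 1

end LogConformalFactor

theorem logConformalFactor_oddFlatExp {a : ℝ} (ha : 0 < a) (u : ℝ) :
    logConformalFactor (a ^ 2) (2 + 2 / a) (oddFlatExp a u) = 1 + oddFlatExpDeriv a u ^ 2 := by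
  rcases eq_or_ne u 0 with rfl | hu
  · simp [oddFlatExp_zero, logConformalFactor_zero, oddFlatExpDeriv_zero ha]
  have hpos : 0 < |u| := abs_pos.2 hu
  have hlog : Real.log (1 / |oddFlatExp a u|) = 1 / |u| ^ a := by
    rw [abs_oddFlatExp a hu, one_div (Real.exp _), Real.log_inv, Real.log_exp, neg_neg]
  have hpow : (1 / |u| ^ a) ^ (2 + 2 / a) = (1 / |u| ^ (a + 1)) ^ 2 := by
    rw [one_div, one_div, ← Real.rpow_neg hpos.le, ← Real.rpow_neg hpos.le,
      ← Real.rpow_mul hpos.le, ← Real.rpow_mul_natCast hpos.le]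
    congr 1
    push_cast
    field_simp
  rw [logConformalFactor, hlog, hpow, ← sq_abs (oddFlatExp a u), abs_oddFlatExp a hu,
    oddFlatExpDeriv]
  ring

theorem geodesicEquationAt_oddFlatExp {a : ℝ} (ha : 0 < a) (u : ℝ) :
    GeodesicEquationAt (logConformalFactor (a ^ 2) (2 + 2 / a)) (oddFlatExp a) u := by
  have hderiv := deriv_oddFlatExp ha
  rcases eq_or_ne u 0 with rfl | hu
  · apply GeodesicEquationAt.of_deriv_eq_zero
    · rw [hderiv, (hasDerivAt_oddFlatExpDeriv_zero ha).deriv]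
    · rw [oddFlatExp_zero, (hasDerivAt_logConformalFactor_zero _ _).deriv]
  · apply GeodesicEquationAt.of_clairaut one_ne_zero
    · rw [hderiv]
      exact (oddFlatExpDeriv_pos ha hu).ne'
    · rw [hderiv]
      exact differentiable_oddFlatExpDeriv ha u
    · exact differentiableAt_logConformalFactor _ _ (abs_oddFlatExp_lt_one a u)
    · refine .of_forall fun x => ?_
      simp only [hderiv, one_mul]
      exact logConformalFactor_oddFlatExp ha x

theorem branching_geodesics_exp_general {a : ℝ} (ha : 0 < a) :
    let h : ℝ → ℝ := logConformalFactor (a ^ 2) (2 + 2 / a)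
    let v₁ : ℝ → ℝ := fun _ => 0
    let v₂ : ℝ → ℝ := oddFlatExp a
    h 0 = 1 ∧ v₂ 0 = 0 ∧
    (∀ x ∈ Ioo (-1 : ℝ) 1, DifferentiableAt ℝ h x ∧ 0 < h x) ∧
    (∀ u, v₂ u ∈ Ioo (-1 : ℝ) 1) ∧
    (∀ u, DifferentiableAt ℝ v₁ u ∧ DifferentiableAt ℝ (deriv v₁) u ∧
      DifferentiableAt ℝ v₂ u ∧ DifferentiableAt ℝ (deriv v₂) u) ∧
    (∀ u, GeodesicEquationAt h v₁ u ∧ GeodesicEquationAt h v₂ u) ∧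
    v₁ 0 = 0 ∧ deriv v₁ 0 = 0 ∧ deriv v₂ 0 = 0 ∧
    (∀ u ≠ 0, v₁ u ≠ v₂ u) := by
  intro h v₁ v₂
  have hv₁ : deriv v₁ = fun _ => 0 := deriv_const' 0
  have hv₂ : deriv v₂ = oddFlatExpDeriv a := deriv_oddFlatExp ha
  refine ⟨logConformalFactor_zero _ _, oddFlatExp_zero a,
    fun x hx => ⟨differentiableAt_logConformalFactor _ _ (abs_lt.2 hx),
      logConformalFactor_pos (sq_nonneg a) _ (abs_lt.2 hx).le⟩,
    fun u => abs_lt.1 (abs_oddFlatExp_lt_one a u),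
    fun u => ⟨differentiableAt_const 0, ?_, (hasDerivAt_oddFlatExp ha u).differentiableAt, ?_⟩,
    fun u => ⟨.of_deriv_eq_zero ?_ ?_, geodesicEquationAt_oddFlatExp ha u⟩,
    rfl, deriv_const 0 0, (hasDerivAt_oddFlatExp_zero ha).deriv,
    fun u hu => (oddFlatExp_ne_zero a hu).symm⟩
  · rw [hv₁]
    exact differentiableAt_const 0
  · rw [hv₂]
    exact differentiable_oddFlatExpDeriv ha u
  · rw [hv₁, deriv_const]
  · exact (hasDerivAt_logConformalFactor_zero _ _).deriv

/-- Branching geodesics, second family of examples: for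
`h(x) = 1 + k²(log(1/|x|))^{2+2/k} x²` on `(-1,1)` (with `h(0) = 1`), the
functions `v₁ ≡ 0` and `v₂(u) = sgn(u)·exp(−1/|u|^k)` are two distinct twice
differentiable solutions on `(-1,1)` of the geodesic equation
`2 v'' = (1 + v'²) h'(v)/h(v)` with the same initial position and velocity
at `u = 0`. -/
theorem branching_geodesics_exp (k : ℕ) (hk : 1 ≤ k) :
    let h : ℝ → ℝ := fun x =>
      1 + (k : ℝ) ^ 2 * (Real.log (1 / |x|)) ^ ((2 : ℝ) + 2 / (k : ℝ)) * x ^ 2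
    let v₁ : ℝ → ℝ := fun _ => 0
    let v₂ : ℝ → ℝ := fun u => Real.sign u * Real.exp (-(1 / |u| ^ k))
    h 0 = 1 ∧ v₂ 0 = 0 ∧
    (∀ x ∈ Set.Ioo (-1 : ℝ) 1, DifferentiableAt ℝ h x ∧ 0 < h x) ∧
    (∀ u ∈ Set.Ioo (-1 : ℝ) 1, v₂ u ∈ Set.Ioo (-1 : ℝ) 1) ∧
    (∀ u ∈ Set.Ioo (-1 : ℝ) 1,
      DifferentiableAt ℝ v₁ u ∧ DifferentiableAt ℝ (deriv v₁) u ∧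
      DifferentiableAt ℝ v₂ u ∧ DifferentiableAt ℝ (deriv v₂) u) ∧
    (∀ u ∈ Set.Ioo (-1 : ℝ) 1,
      2 * deriv (deriv v₁) u = (1 + (deriv v₁ u) ^ 2) * deriv h (v₁ u) / h (v₁ u) ∧
      2 * deriv (deriv v₂) u = (1 + (deriv v₂ u) ^ 2) * deriv h (v₂ u) / h (v₂ u)) ∧
    v₁ 0 = 0 ∧ deriv v₁ 0 = 0 ∧ deriv v₂ 0 = 0 ∧
    (∃ u ∈ Set.Ioo (-1 : ℝ) 1, v₁ u ≠ v₂ u) := by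
  obtain ⟨hh0, hv0, hh, hmem, hdiff, hgeo, h₁, h₁', h₂', hne⟩ :=
    oddFlatExp_natCast k ▸ branching_geodesics_exp_general (Nat.cast_pos.2 hk)
  exact ⟨hh0, hv0, hh, fun u _ => hmem u, fun u _ => hdiff u, fun u _ => hgeo u, h₁, h₁', h₂',
    1 / 2, by norm_num, hne _ (by norm_num)⟩
end

section
/- Let a > 0, ε > 0, T > 0, and let f : [0, T] → ℝ be differentiable with f'(τ) ≤ −f(τ)²/a + ε for all τ ∈ [0, T] and f(0) ≤ ε. Then f(τ) ≤ max(√(a·ε), ε) for all τ ∈ [0, T]. -/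
/-!
A constant `M ≥ 0` with `a * ε ≤ M ^ 2` is a supersolution of `y' = -y ^ 2 / a + ε`: wherever
`f > M`, the right-hand side is nonpositive, so `f` cannot grow and never gets above `M` once it
starts below. The constant `max √(a * ε) ε` is such an `M`.
-/

section Comparison

open Set

theorem hasDerivWithinAt_Ici_of_Icc {E : Type*} [NormedAddCommGroup E] [NormedSpace ℝ E]
    {f : ℝ → E} {f' : E} {s t x : ℝ} (hf : HasDerivWithinAt f f' (Icc s t) x)
    (hx : x ∈ Ico s t) : HasDerivWithinAt f f' (Ici x) x :=
  hf.mono_of_mem_nhdsWithin (Icc_mem_nhdsGE_of_mem hx)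

variable {f f' : ℝ → ℝ} {s t : ℝ}

theorem image_le_of_deriv_right_le_deriv_of_lt {B B' : ℝ → ℝ} (hf : ContinuousOn f (Icc s t))
    (hf' : ∀ x ∈ Ico s t, HasDerivWithinAt f (f' x) (Ici x) x) (hs : f s ≤ B s)
    (hB : ContinuousOn B (Icc s t))
    (hB' : ∀ x ∈ Ico s t, HasDerivWithinAt B (B' x) (Ici x) x)
    (bound : ∀ x ∈ Ico s t, B x < f x → f' x ≤ B' x) :
    ∀ ⦃x⦄, x ∈ Icc s t → f x ≤ B x := by
  intro x hx
  -- Tilting the barrier makes the derivative inequality strict at every contact point.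
  have le_tilted : ∀ r > 0, f x ≤ B x + r * (x - s + 1) := by
    intro r hr
    refine image_le_of_deriv_right_lt_deriv_boundary' (B := fun y => B y + r * (y - s + 1))
      (B' := fun y => B' y + r * 1) hf hf' ?_ (hB.add (by fun_prop))
      (fun y hy => (hB' y hy).add
        ((((hasDerivWithinAt_id y _).sub_const s).add_const 1).const_mul r)) ?_ hx
    · linarith
    · intro y hy contact
      have above : B y < f y := by
        rw [contact]
        exact lt_add_of_pos_right _ (mul_pos hr (by linarith [hy.1]))
      linarith [bound y hy above]
  have width_pos : 0 < x - s + 1 := by linarith [hx.1]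
  refine le_of_forall_pos_le_add fun δ hδ => ?_
  simpa only [div_mul_cancel₀ δ width_pos.ne'] using
    le_tilted (δ / (x - s + 1)) (div_pos hδ width_pos)

theorem neg_sq_div_add_nonpos {a ε M y : ℝ} (ha : 0 < a) (hM : 0 ≤ M) (haε : a * ε ≤ M ^ 2)
    (hy : M ≤ y) : -y ^ 2 / a + ε ≤ 0 := by
  have le_div : ε ≤ y ^ 2 / a :=
    (le_div_iff₀' ha).2 (haε.trans (pow_le_pow_left₀ hM hy 2))
  rw [neg_div]
  linarith

theorem riccati_comparison_general {a ε M : ℝ} (ha : 0 < a) (hM : 0 ≤ M) (haε : a * ε ≤ M ^ 2)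
    (hf : ContinuousOn f (Icc s t))
    (hf' : ∀ x ∈ Ico s t, HasDerivWithinAt f (f' x) (Ici x) x)
    (bound : ∀ x ∈ Ico s t, f' x ≤ -(f x) ^ 2 / a + ε) (hs : f s ≤ M) :
    ∀ x ∈ Icc s t, f x ≤ M :=
  image_le_of_deriv_right_le_deriv_of_lt hf hf' hs continuousOn_const
    (fun x _ => hasDerivWithinAt_const x _ M)
    fun x hx above => (bound x hx).trans (neg_sq_div_add_nonpos ha hM haε above.le)

end Comparison

/-- Riccati comparison estimate: if `f' ≤ −f²/a + ε` on `[0,T]` and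
`f(0) ≤ ε`, then `f ≤ max(√(aε), ε)` on `[0,T]`. -/
theorem riccati_comparison (a ε T : ℝ) (ha : 0 < a) (hε : 0 < ε) (hT : 0 < T)
    (f f' : ℝ → ℝ)
    (hf : ∀ τ ∈ Set.Icc (0 : ℝ) T, HasDerivWithinAt f (f' τ) (Set.Icc 0 T) τ)
    (hf' : ∀ τ ∈ Set.Icc (0 : ℝ) T, f' τ ≤ -(f τ) ^ 2 / a + ε)
    (hf0 : f 0 ≤ ε) :
    ∀ τ ∈ Set.Icc (0 : ℝ) T, f τ ≤ max (Real.sqrt (a * ε)) ε := by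
  obtain ⟨hM, haε⟩ := Real.sqrt_le_iff.1 (le_max_left (Real.sqrt (a * ε)) ε)
  exact riccati_comparison_general ha hM haε (HasDerivWithinAt.continuousOn hf)
    (fun τ hτ => hasDerivWithinAt_Ici_of_Icc (hf τ (Set.Ico_subset_Icc_self hτ)) hτ)
    (fun τ hτ => hf' τ (Set.Ico_subset_Icc_self hτ)) (hf0.trans (le_max_right _ _))
end
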